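/- Let G be a simple graph on [n] whose edge ideal I = I(G) has almost maximal finite index with index(I) > 1, and let C be an induced cycle of length > 3 in the complement graph Ḡ. Then there is at most one vertex in [n] \ V(C) which fails to be adjacent in Ḡ to all vertices of C. -/

import Mathlib

open Finsupp

namespace EP

variable (K : Type) [Field K]

/-! ## Simplicial chains over a linearly ordered vertex set -/

variable {V : Type} [Fintype V] [DecidableEq V] [LinearOrder V]

/-- Boundary of a single (oriented) face, given as a finset. -/
noncomputable def bdFace (s : Finset V) : Finset V →₀ K :=
  ∑ v ∈ s, ((-1 : K) ^ ((s.filter (fun w => w < v)).card)) • Finsupp.single (s.erase v) 1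

/-- The simplicial boundary map on the free module on all finsets of vertices
(the augmented oriented chain complex, with the empty set playing the role of
the `(-1)`-dimensional face). -/
noncomputable def bdS : (Finset V →₀ K) →ₗ[K] (Finset V →₀ K) :=
  Finsupp.lsum K fun s => LinearMap.toSpanSingleton K (Finset V →₀ K) (bdFace K s)

/-- Chains supported on faces of a complex `Δ` having `k` vertices. -/
noncomputable def faceSpan (Δ : Set (Finset V)) (k : ℕ) : Submodule K (Finset V →₀ K) :=
  Submodule.span K {c | ∃ F ∈ Δ, F.card = k ∧ c = Finsupp.single F 1}

/-- Dimension of the `d`-th reduced simplicial homology of `Δ` over `K`. -/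
noncomputable def redHomRank (Δ : Set (Finset V)) (d : ℕ) : ℕ :=
  Module.finrank K ↥(faceSpan K Δ (d+1) ⊓ LinearMap.ker (bdS K)) -
    Module.finrank K
      ↥(Submodule.map (bdS K) (faceSpan K Δ (d+2)) ⊓
          (faceSpan K Δ (d+1) ⊓ LinearMap.ker (bdS K)))

/-- The flag complex of a graph: faces are the cliques. -/
def flagComplex (G : SimpleGraph V) : Set (Finset V) :=
  {F | ∀ i ∈ F, ∀ j ∈ F, i ≠ j → G.Adj i j}

/-- The flag complex of the induced subgraph of `G` on `W`. -/
def flagComplexOn (G : SimpleGraph V) (W : Finset V) : Set (Finset V) :=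
  {F | (F : Set V) ⊆ (W : Set V) ∧ ∀ i ∈ F, ∀ j ∈ F, i ≠ j → G.Adj i j}

/-- The induced subcomplex of `Δ` on a vertex subset `W`. -/
def restrictComplex (Δ : Set (Finset V)) (W : Finset V) : Set (Finset V) :=
  {F | F ∈ Δ ∧ F ⊆ W}

/-- The oriented `1`-chain `[a,b]` (so `[a,b] = -[b,a]`). -/
noncomputable def edgeChain (a b : V) : Finset V →₀ K :=
  if a < b then Finsupp.single {a, b} 1 else -Finsupp.single {a, b} 1

/-- The oriented `2`-chain `[x,y,z]`, antisymmetric under transpositions. -/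
noncomputable def triChain (x y z : V) : Finset V →₀ K :=
  if (x < y ∧ y < z) ∨ (y < z ∧ z < x) ∨ (z < x ∧ x < y)
  then Finsupp.single {x, y, z} 1
  else -Finsupp.single {x, y, z} 1

/-! ## Graded Betti numbers of monomial ideals via the Taylor complex -/

variable {n : ℕ}

/-- The multidegree lcm of the monomial generators indexed by `S`. -/
def mlcm {r : ℕ} (g : Fin r → (Fin n → ℕ)) (S : Finset (Fin r)) : Fin n → ℕ :=
  fun x => S.sup fun k => g k x

/-- The differential of the Taylor complex tensored with the residue field `K`. -/
noncomputable def bdT {r : ℕ} (g : Fin r → (Fin n → ℕ)) :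
    (Finset (Fin r) →₀ K) →ₗ[K] (Finset (Fin r) →₀ K) :=
  Finsupp.lsum K fun S => LinearMap.toSpanSingleton K (Finset (Fin r) →₀ K)
    (∑ k ∈ S, if mlcm g (S.erase k) = mlcm g S
      then ((-1 : K) ^ ((S.filter (fun j => j < k)).card)) • Finsupp.single (S.erase k) (1 : K)
      else 0)

/-- The degree-`j` strand of the Taylor complex in homological degree `p`. -/
noncomputable def strand {r : ℕ} (g : Fin r → (Fin n → ℕ)) (p j : ℕ) :
    Submodule K (Finset (Fin r) →₀ K) :=
  Submodule.span K
    {c | ∃ S : Finset (Fin r), S.card = p ∧ (∑ x, mlcm g S x) = j ∧ c = Finsupp.single S 1}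

/-- `dim_K Tor_p(S/I, K)_j`, computed from the Taylor complex on the monomial
generators `g` of `I`. -/
noncomputable def torRank {r : ℕ} (g : Fin r → (Fin n → ℕ)) (p j : ℕ) : ℕ :=
  Module.finrank K ↥(strand K g p j ⊓ LinearMap.ker (bdT K g)) -
    Module.finrank K
      ↥(Submodule.map (bdT K g) (strand K g (p+1) j) ⊓
          (strand K g p j ⊓ LinearMap.ker (bdT K g)))

/-- The graded Betti number `β_{i,j}(I)` of the monomial ideal `I` generated by
the monomials with exponent vectors `g`, i.e. `dim_K Tor_i(I, K)_j = dim_K Tor_{i+1}(S/I, K)_j`. -/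
noncomputable def betti {r : ℕ} (g : Fin r → (Fin n → ℕ)) (i j : ℕ) : ℕ :=
  torRank K g (i+1) j

/-- The monomial with exponent vector `a`. -/
noncomputable def mono (a : Fin n → ℕ) : MvPolynomial (Fin n) K :=
  MvPolynomial.monomial (Finsupp.equivFunOnFinite.symm a) 1

/-- `g` is a list of exponent vectors of monomials generating the ideal `I`. -/
def IsGenSet {r : ℕ} (g : Fin r → (Fin n → ℕ)) (I : Ideal (MvPolynomial (Fin n) K)) : Prop :=
  Ideal.span (Set.range fun k => mono K (g k)) = I

/-- The ideal (generated by the monomials with exponent vectors `g`) has a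
`d`-linear resolution. -/
def HasLinRes {r : ℕ} (g : Fin r → (Fin n → ℕ)) (d : ℕ) : Prop :=
  ∀ i j, betti K g i j ≠ 0 → j = i + d

/-- Castelnuovo–Mumford regularity of a monomial ideal, from its Betti numbers. -/
noncomputable def regT {r : ℕ} (g : Fin r → (Fin n → ℕ)) : ℕ :=
  sSup {d | ∃ i j, betti K g i j ≠ 0 ∧ j = i + d}

/-! ## Edge ideals -/

/-- The edge ideal of a simple graph. -/
noncomputable def edgeIdeal (G : SimpleGraph (Fin n)) : Ideal (MvPolynomial (Fin n) K) :=
  Ideal.span {m | ∃ i j : Fin n, G.Adj i j ∧ m = MvPolynomial.X i * MvPolynomial.X j}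

/-- The edge set of `G` as a finset. -/
noncomputable def edgeFins (G : SimpleGraph (Fin n)) : Finset (Sym2 (Fin n)) :=
  letI : Fintype ↥G.edgeSet := Fintype.ofFinite _
  G.edgeFinset

/-- The canonical monomial (exponent vector) generators of the edge ideal of `G`. -/
noncomputable def edgeGens (G : SimpleGraph (Fin n)) : Fin (edgeFins G).card → (Fin n → ℕ) :=
  fun k x => if x ∈ ((edgeFins G).equivFin.symm k : Sym2 (Fin n)) then 1 else 0

/-- The graded Betti numbers `β_{i,j}(I(G))` of the edge ideal of `G` over `K`. -/
noncomputable def gBetti (G : SimpleGraph (Fin n)) (i j : ℕ) : ℕ :=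
  betti K (edgeGens G) i j

/-- The projective dimension `pd(I(G))` of the edge ideal of `G` over `K`. -/
noncomputable def gPd (G : SimpleGraph (Fin n)) : ℕ :=
  sSup {i | ∃ j, gBetti K G i j ≠ 0}

/-- The Green–Lazarsfeld index of the edge ideal of `G` over `K`
(`⊤` iff the ideal has a linear resolution). -/
noncomputable def gIndex (G : SimpleGraph (Fin n)) : ℕ∞ :=
  sInf {N : ℕ∞ | ∃ i j : ℕ, N = (i : ℕ∞) ∧ i + 2 < j ∧ gBetti K G i j ≠ 0}

/-- The regularity of the edge ideal of `G` over `K`. -/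
noncomputable def gReg (G : SimpleGraph (Fin n)) : ℕ :=
  sSup {d | ∃ i j, gBetti K G i j ≠ 0 ∧ j = i + d}

/-- The edge ideal of `G` has a (2-)linear resolution over `K`. -/
def gLinRes (G : SimpleGraph (Fin n)) : Prop :=
  ∀ i j, gBetti K G i j ≠ 0 → j = i + 2

/-- The edge ideal of `G` has almost maximal finite index over `K`:
`index(I(G)) = pd(I(G)) - 1` (with the index finite). -/
def AMFI (G : SimpleGraph (Fin n)) : Prop :=
  gIndex K G + 1 = (gPd K G : ℕ∞)

/-! ## Graph-theoretic notions -/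

/-- `H` contains an induced (chordless) cycle of length `l`. -/
def HasInducedCycle {W : Type} (H : SimpleGraph W) (l : ℕ) : Prop :=
  ∃ f : ZMod l → W, Function.Injective f ∧
    ∀ i j : ZMod l, H.Adj (f i) (f j) ↔ (j = i + 1 ∨ i = j + 1)

/-- `H` is chordal: it has no induced cycle of length greater than `3`. -/
def Chordal {W : Type} (H : SimpleGraph W) : Prop :=
  ∀ l : ℕ, 3 < l → ¬ HasInducedCycle H l

end EP


set_option linter.unusedSectionVars false

namespace EPaux

open Finset

section signs
variable (K : Type) [Field K] {α : Type} [LinearOrder α]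

def sg (T : Finset α) (v : α) : K := (-1 : K) ^ ((T.filter (fun w => w < v)).card)

theorem sg_sq (T : Finset α) (v : α) : sg K T v * sg K T v = 1 := by
  unfold sg; rw [← mul_pow]; simp

theorem sg_ne (T : Finset α) (v : α) : sg K T v ≠ 0 := by
  unfold sg; exact pow_ne_zero _ (by simp)

theorem sg_insert {T : Finset α} {u : α} (hu : u ∉ T) (v : α) :
    sg K (insert u T) v = (if u < v then -1 else 1) * sg K T v := by
  unfold sg
  rw [Finset.filter_insert]
  split_ifs with h
  · rw [Finset.card_insert_of_notMem (by simp [hu]), pow_succ]; ring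
  · simp

theorem sg_erase {T : Finset α} {u : α} (hu : u ∈ T) (v : α) :
    sg K (T.erase u) v = (if u < v then -1 else 1) * sg K T v := by
  have := sg_insert K (Finset.notMem_erase u T) v
  rw [Finset.insert_erase hu] at this
  rw [this, ← mul_assoc]
  split_ifs <;> simp

theorem sg_swap {S : Finset α} {k j : α} (hk : k ∈ S) (hj : j ∈ S) (h : k ≠ j) :
    sg K S k * sg K (S.erase k) j = - (sg K S j * sg K (S.erase j) k) := by
  rw [sg_erase K hk, sg_erase K hj]
  rcases lt_or_gt_of_ne h with h | h
  · simp [h, h.not_gt]; ring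
  · simp [h, h.not_gt]; ring

theorem sg_swap2 {T : Finset α} {u v : α} (hu : u ∉ T) (hv : v ∈ T) :
    sg K T v * sg K (T.erase v) u = - (sg K T u * sg K (insert u T) v) := by
  have h : u ≠ v := fun h => hu (h ▸ hv)
  rw [sg_erase K hv, sg_insert K hu]
  rcases lt_or_gt_of_ne h with h | h
  · simp [h, h.not_gt]; ring
  · simp [h, h.not_gt]; ring

end signs

section ops
variable (K : Type) [Field K] {E V : Type} [LinearOrder E] [LinearOrder V]

def dT : (Finset E → Finset V → K) →ₗ[K] (Finset E → Finset V → K) where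
  toFun F := fun S T => ∑ k ∈ S, sg K S k * F (S.erase k) T
  map_add' F G := by funext S T; simp [mul_add, Finset.sum_add_distrib]
  map_smul' c F := by funext S T; simp [Finset.mul_sum, mul_left_comm]

def dK : (Finset E → Finset V → K) →ₗ[K] (Finset E → Finset V → K) where
  toFun F := fun S T => (-1 : K) ^ S.card * ∑ v ∈ T, sg K T v * F S (T.erase v)
  map_add' F G := by funext S T; simp [mul_add, Finset.sum_add_distrib]
  map_smul' c F := by funext S T; simp [Finset.mul_sum, mul_left_comm]

variable (cv : Finset E → Prop) [DecidablePred cv] (u : Finset E → V)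

def hh : (Finset E → Finset V → K) →ₗ[K] (Finset E → Finset V → K) where
  toFun F := fun S T => if cv S ∨ u S ∈ T then 0 else
    (-1 : K) ^ S.card * (sg K T (u S) * F S (insert (u S) T))
  map_add' F G := by funext S T; by_cases h : cv S ∨ u S ∈ T <;> simp [h, mul_add]
  map_smul' c F := by funext S T; by_cases h : cv S ∨ u S ∈ T <;> simp [h, mul_left_comm]

def pp : (Finset E → Finset V → K) →ₗ[K] (Finset E → Finset V → K) where
  toFun F := fun S T => if cv S then F S T else 0
  map_add' F G := by funext S T; by_cases h : cv S <;> simp [h]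
  map_smul' c F := by funext S T; by_cases h : cv S <;> simp [h]

theorem dT_dT (F : Finset E → Finset V → K) : dT K (dT K F) = 0 := by
  funext S T
  simp only [dT, LinearMap.coe_mk, AddHom.coe_mk, Pi.zero_apply, Finset.mul_sum]
  rw [Finset.sum_sigma']
  refine Finset.sum_involution (fun x _ => ⟨x.2, x.1⟩) ?_ ?_ ?_ ?_
  · rintro ⟨k, j⟩ h
    simp only [Finset.mem_sigma, Finset.mem_erase] at h
    have h1 := sg_swap K h.1 h.2.2 h.2.1.symm
    simp only
    rw [← mul_assoc, ← mul_assoc, h1, Finset.erase_right_comm]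
    ring
  · rintro ⟨k, j⟩ h _ h2
    simp only [Finset.mem_sigma, Finset.mem_erase] at h
    simp only [Sigma.mk.injEq] at h2
    exact h.2.1 h2.1
  · rintro ⟨k, j⟩ h
    simp only [Finset.mem_sigma, Finset.mem_erase] at h ⊢
    exact ⟨h.2.2, h.2.1.symm, h.1⟩
  · rintro ⟨k, j⟩ h
    rfl

theorem dK_dT (F : Finset E → Finset V → K) : dK K (dT K F) = - dT K (dK K F) := by
  funext S T
  simp only [dT, dK, LinearMap.coe_mk, AddHom.coe_mk, Pi.neg_apply, Finset.mul_sum]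
  rw [Finset.sum_comm, ← Finset.sum_neg_distrib]
  refine Finset.sum_congr rfl fun k hk => ?_
  rw [← Finset.sum_neg_distrib]
  refine Finset.sum_congr rfl fun v hv => ?_
  rw [← Finset.card_erase_add_one hk, pow_succ]
  ring

theorem homot (F : Finset E → Finset V → K) :
    dK K (hh K cv u F) + hh K cv u (dK K F) = F - pp K cv F := by
  funext S T
  have hs : ((-1 : K) ^ S.card) * ((-1 : K) ^ S.card) = 1 := by rw [← mul_pow]; simp
  simp only [dK, hh, pp, LinearMap.coe_mk, AddHom.coe_mk, Pi.add_apply, Pi.sub_apply]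
  by_cases hc : cv S
  · simp [hc]
  simp only [hc, false_or, if_false, sub_zero]
  by_cases hu : u S ∈ T
  · rw [if_pos hu, Finset.sum_eq_single_of_mem (u S) hu]
    · rw [if_neg (by simp), Finset.insert_erase hu, sg_erase K hu, if_neg (lt_irrefl _)]
      linear_combination (sg K T (u S) * sg K T (u S) * F S T) * hs + F S T * sg_sq K T (u S)
    · intro v hv hne
      rw [if_pos (by simp [hu, hne.symm]), mul_zero]
  · rw [if_neg hu, Finset.sum_insert hu, Finset.erase_insert hu, sg_insert K hu,
      if_neg (lt_irrefl _)]
    have : ∑ v ∈ T, sg K T v * (if u S ∈ T.erase v then 0 else (-1 : K) ^ S.card *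
          (sg K (T.erase v) (u S) * F S (insert (u S) (T.erase v))))
        = - ((-1 : K) ^ S.card * (sg K T (u S) *
          ∑ v ∈ T, sg K (insert (u S) T) v * F S ((insert (u S) T).erase v))) := by
      rw [Finset.mul_sum, Finset.mul_sum, ← Finset.sum_neg_distrib]
      refine Finset.sum_congr rfl fun v hv => ?_
      have hne : u S ≠ v := fun h => hu (h ▸ hv)
      rw [if_neg (by simp [hu]), Finset.erase_insert_of_ne hne]
      linear_combination ((-1 : K) ^ S.card * F S (insert (u S) (T.erase v))) * sg_swap2 K hu hv
    rw [this]
    linear_combination (sg K T (u S) * sg K T (u S) * F S T) * hs + F S T * sg_sq K T (u S)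

theorem hTp (hcv : ∀ S S', S' ⊆ S → cv S' → cv S) (F : Finset E → Finset V → K) :
    hh K cv u (dT K (pp K cv F)) = 0 := by
  funext S T
  simp only [dT, hh, pp, LinearMap.coe_mk, AddHom.coe_mk, Pi.zero_apply]
  split_ifs with h
  · rfl
  · push Not at h
    rw [Finset.sum_eq_zero, mul_zero, mul_zero]
    intro k _
    rw [if_neg (fun hk => h.1 (hcv _ _ (Finset.erase_subset k S) hk)), mul_zero]

theorem exists_Phi [Fintype E] (Ψ : Finset E → Finset V → K) :
    ∃ Φ : Finset E → Finset V → K, Φ = Ψ - dT K (hh K cv u Φ) := by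
  let it : ℕ → (Finset E → Finset V → K) := fun N =>
    Nat.rec Ψ (fun _ F => Ψ - dT K (hh K cv u F)) N
  have hit : ∀ N, it (N+1) = Ψ - dT K (hh K cv u (it N)) := fun N => rfl
  have hit0 : it 0 = Ψ := rfl
  clear_value it
  have key : ∀ N (S : Finset E), S.card ≤ N → it (N+1) S = it N S := by
    intro N
    induction N with
    | zero =>
      intro S hS
      have : S = ∅ := by simpa using hS
      subst this
      rw [hit, hit0]
      funext T
      simp [dT]
    | succ N ih =>
      intro S hS
      conv_lhs => rw [hit (N+1)]
      conv_rhs => rw [hit N]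
      funext T
      simp only [dT, hh, LinearMap.coe_mk, AddHom.coe_mk, Pi.sub_apply]
      congr 1
      refine Finset.sum_congr rfl fun k hk => ?_
      have := Finset.card_erase_add_one hk
      rw [ih (S.erase k) (by omega)]
  refine ⟨it (Fintype.card E), ?_⟩
  rw [← hit]
  funext S
  exact (key _ S (Finset.card_le_univ S)).symm

/-- The transferred cocycle identity. -/
theorem transfer (P : Finset E → Finset V → Prop)
    (hcv : ∀ S S', S' ⊆ S → cv S' → cv S)
    (hP1 : ∀ S T k, P S T → P (S.erase k) T)
    (hP2 : ∀ S T, ¬ cv S → P S T → P S (insert (u S) T))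
    (Ψ Φ : Finset E → Finset V → K)
    (hΨ : ∀ S T, P S T → dT K Ψ S T + dK K Ψ S T = 0)
    (hΦ : Φ = Ψ - dT K (hh K cv u Φ)) (S : Finset E) (hS : P S ∅) :
    ∑ k ∈ S, sg K S k * (if cv (S.erase k) then Φ (S.erase k) ∅ else 0) = 0 := by
  set Q := dK K Φ + dT K (pp K cv Φ) with hQ
  have h1 : dT K Φ = dT K Ψ := by
    conv_lhs => rw [hΦ]
    rw [map_sub, dT_dT, sub_zero]
  have hQeq : Q = (dT K Ψ + dK K Ψ) - dT K (hh K cv u Q) := by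
    have h2 : dK K Φ = dK K Ψ + dT K (dK K (hh K cv u Φ)) := by
      conv_lhs => rw [hΦ]
      rw [map_sub, dK_dT, sub_neg_eq_add]
    have h3 := homot K cv u Φ
    have h4 : dK K (hh K cv u Φ) = Φ - pp K cv Φ - hh K cv u (dK K Φ) := by
      rw [← h3]; abel
    have h5 : hh K cv u Q = hh K cv u (dK K Φ) := by
      rw [hQ, map_add, hTp K cv u hcv, add_zero]
    rw [h5, hQ]
    conv_lhs => rw [h2, h4]
    rw [map_sub, map_sub, h1]
    abel
  have hQ0 : ∀ N (S : Finset E) T, S.card ≤ N → P S T → Q S T = 0 := by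
    intro N
    induction N with
    | zero =>
      intro S T hc hP
      have : S = ∅ := by simpa using hc
      subst this
      rw [hQeq]
      simp only [Pi.sub_apply, Pi.add_apply]
      rw [hΨ _ _ hP]
      simp [dT]
    | succ N ih =>
      intro S T hc hP
      rw [hQeq]
      simp only [Pi.sub_apply, Pi.add_apply]
      rw [hΨ _ _ hP, zero_sub, neg_eq_zero]
      simp only [dT, hh, LinearMap.coe_mk, AddHom.coe_mk]
      refine Finset.sum_eq_zero fun k hk => ?_
      split_ifs with h
      · simp
      · push Not at h
        have := Finset.card_erase_add_one hk
        rw [ih _ _ (by omega) (hP2 _ _ h.1 (hP1 _ _ k hP))]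
        simp
  have := hQ0 _ S ∅ le_rfl hS
  rw [hQ] at this
  simpa [dK, dT, pp] using this

end ops
end EPaux
namespace EPaux
open Finset

theorem torRank_ne (K : Type) [Field K] {n r : ℕ} (g : Fin r → (Fin n → ℕ)) (p j : ℕ)
    (φ : (Finset (Fin r) →₀ K) →ₗ[K] K) (x : Finset (Fin r) →₀ K)
    (hφ : ∀ y, φ (EP.bdT K g y) = 0) (hx : x ∈ EP.strand K g p j) (hx0 : EP.bdT K g x = 0)
    (hne : φ x ≠ 0) : EP.torRank K g p j ≠ 0 := by
  unfold EP.torRank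
  have : Submodule.map (EP.bdT K g) (EP.strand K g (p+1) j) ⊓
          (EP.strand K g p j ⊓ LinearMap.ker (EP.bdT K g))
          < (EP.strand K g p j ⊓ LinearMap.ker (EP.bdT K g)) := by
    refine lt_of_le_of_ne inf_le_right ?_
    intro h
    have hmem : x ∈ EP.strand K g p j ⊓ LinearMap.ker (EP.bdT K g) := ⟨hx, hx0⟩
    rw [← h] at hmem
    obtain ⟨y, _, hy⟩ := hmem.1
    exact hne (by rw [← hy, hφ])
  have := Submodule.finrank_lt_finrank_of_lt this
  omega

section psi
variable (K : Type) [Field K] {V : Type} [LinearOrder V] (W : Finset V) (z : V → V → K)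

def psi (T : Finset V) : K :=
  ∑ x ∈ W, ∑ y ∈ W, if x < y ∧ T = (W.erase x).erase y then sg K W x * sg K W y * z x y else 0

theorem psi_zero {T : Finset V}
    (h : ∀ x ∈ W, ∀ y ∈ W, x ≠ y → T = (W.erase x).erase y → z x y = 0) : psi K W z T = 0 := by
  unfold psi
  refine Finset.sum_eq_zero fun x hx => Finset.sum_eq_zero fun y hy => ?_
  split_ifs with h1
  · rw [h x hx y hy h1.1.ne h1.2, mul_zero]
  · rfl

theorem psi_lt {x y : V} (hx : x ∈ W) (hy : y ∈ W) (hxy : x < y) :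
    psi K W z ((W.erase x).erase y) = sg K W x * sg K W y * z x y := by
  unfold psi
  have key : ∀ x' ∈ W, ∀ y' ∈ W, x' < y' → (W.erase x).erase y = (W.erase x').erase y' →
      x' = x ∧ y' = y := by
    intro x' hx' y' hy' hlt h
    have e1 : x' = x ∨ x' = y := by
      by_contra hc; push Not at hc
      have : x' ∈ (W.erase x).erase y := by simp [hc, hx']
      rw [h] at this; simp at this
    have e2 : y' = x ∨ y' = y := by
      by_contra hc; push Not at hc
      have : y' ∈ (W.erase x).erase y := by simp [hc, hy']
      rw [h] at this; simp at this
    rcases e1 with rfl | rfl <;> rcases e2 with rfl | rfl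
    · exact absurd hlt (lt_irrefl _)
    · exact ⟨rfl, rfl⟩
    · exact absurd hlt hxy.not_gt
    · exact absurd hlt (lt_irrefl _)
  rw [Finset.sum_eq_single_of_mem x hx, Finset.sum_eq_single_of_mem y hy]
  · simp [hxy]
  · intro y' hy' hne
    rw [if_neg]
    rintro ⟨h1, h2⟩
    exact hne (key x hx y' hy' h1 h2).2
  · intro x' hx' hne
    refine Finset.sum_eq_zero fun y' hy' => ?_
    rw [if_neg]
    rintro ⟨h1, h2⟩
    exact hne (key x' hx' y' hy' h1 h2).1

theorem psi_bd (hanti : ∀ x y, z x y = - z y x) (hz0 : ∀ x, z x x = 0)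
    (hsum : ∀ x, ∑ y ∈ W, z x y = 0) {T : Finset V} (hT : T ⊆ W) :
    ∑ v ∈ T, sg K T v * psi K W z (T.erase v) = 0 := by
  by_cases h : ∃ x ∈ W, T = W.erase x
  · obtain ⟨x, hx, rfl⟩ := h
    have : ∀ v ∈ W.erase x, sg K (W.erase x) v * psi K W z ((W.erase x).erase v)
        = - sg K W x * z x v := by
      intro v hv
      have hv' := Finset.mem_erase.1 hv
      rw [sg_erase K hx]
      rcases lt_or_gt_of_ne hv'.1 with h | h
      · rw [if_neg h.not_gt, Finset.erase_right_comm, psi_lt K W z hv'.2 hx h, hanti x v]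
        linear_combination (sg K W x * z v x) * sg_sq K W v
      · rw [if_pos h, psi_lt K W z hx hv'.2 h]
        linear_combination (- sg K W x * z x v) * sg_sq K W v
    rw [Finset.sum_congr rfl this, ← Finset.mul_sum]
    have h2 := hsum x
    rw [← Finset.add_sum_erase _ _ hx, hz0, zero_add] at h2
    rw [h2, mul_zero]
  · push Not at h
    refine Finset.sum_eq_zero fun v hv => ?_
    rw [psi_zero, mul_zero]
    intro x hx y hy hxy he
    exfalso
    have e1 : v = x ∨ v = y := by
      by_contra hc; push Not at hc
      have : v ∈ (W.erase x).erase y := by simp [hc, hT hv]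
      rw [← he] at this; simp at this
    rcases e1 with rfl | rfl
    · apply h y hy
      rw [← Finset.insert_erase hv, he, Finset.erase_right_comm, Finset.insert_erase]
      simp [hx, hxy]
    · apply h x hx
      rw [← Finset.insert_erase hv, he, Finset.insert_erase]
      simp [hy, hxy.symm]

end psi

section core
variable (K : Type) [Field K] {E V : Type} [LinearOrder E] [LinearOrder V] [Fintype E]

theorem exists_cocycle (c : E → Finset V) (W : Finset V) (a b : V) (ha : a ∈ W) (hb : b ∈ W)
    (hab : a ≠ b)
    (z : V → V → K) (hanti : ∀ x y, z x y = - z y x) (hz0 : ∀ x, z x x = 0)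
    (hsum : ∀ x, ∑ y ∈ W, z x y = 0)
    (hE : ∀ k x y, x ≠ y → c k ⊆ {x, y} → z x y = 0)
    (hzab : z a b ≠ 0)
    (κ : V → E) (q : V → V) (hq : ∀ x, q x = a ∨ q x = b)
    (hκ : ∀ x ∈ (W.erase a).erase b, c (κ x) = {x, q x}) :
    ∃ φ : Finset E → K, φ (((W.erase a).erase b).image κ) ≠ 0 ∧
      ∀ S : Finset E, S.biUnion c = W →
        ∑ k ∈ S, sg K S k * (if (S.erase k).biUnion c = W then φ (S.erase k) else 0) = 0 := by
  classical
  set B0 := (W.erase a).erase b with hB0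
  have hmB0 : ∀ x, x ∈ B0 ↔ x ≠ b ∧ x ≠ a ∧ x ∈ W := by
    intro x; simp [hB0]
  have hinj : ∀ x ∈ B0, ∀ y ∈ B0, x ∈ c (κ y) → x = y := by
    intro x hx y hy h
    rw [hκ y hy] at h
    simp only [Finset.mem_insert, Finset.mem_singleton] at h
    rw [hmB0] at hx
    rcases h with h | h
    · exact h
    · rcases hq y with h' | h' <;> rw [h'] at h <;> tauto
  have hself : ∀ x ∈ B0, x ∈ c (κ x) := fun x hx => by rw [hκ x hx]; simp
  -- choice of uncovered vertex
  let u : Finset E → V := fun S =>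
    if h : (B0 \ S.biUnion c).Nonempty then (B0 \ S.biUnion c).min' h
    else if h' : (W \ S.biUnion c).Nonempty then (W \ S.biUnion c).min' h' else a
  have hu1 : ∀ S (h : (B0 \ S.biUnion c).Nonempty), u S = (B0 \ S.biUnion c).min' h := by
    intro S h; simp only [u]; rw [dif_pos h]
  have hu2 : ∀ S : Finset E, ¬ (W ⊆ S.biUnion c) → u S ∈ W ∧ u S ∉ S.biUnion c := by
    intro S hS
    by_cases h : (B0 \ S.biUnion c).Nonempty
    · have := Finset.min'_mem _ h
      rw [← hu1] at this
      rw [Finset.mem_sdiff, hmB0] at this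
      exact ⟨this.1.2.2, this.2⟩
    · have h' : (W \ S.biUnion c).Nonempty := by
        rw [Finset.sdiff_nonempty]; exact hS
      have : u S = (W \ S.biUnion c).min' h' := by
        simp only [u]; rw [dif_neg h, dif_pos h']
      have h2 := Finset.min'_mem _ h'
      rw [← this, Finset.mem_sdiff] at h2
      exact h2
  clear_value u
  let cv : Finset E → Prop := fun S => W ⊆ S.biUnion c
  let Ψ : Finset E → Finset V → K := fun S T => if S = ∅ then psi K W z T else 0
  obtain ⟨Φ, hΦ⟩ := exists_Phi K cv u Ψ
  -- recursion
  have hrec : ∀ S T, S ≠ ∅ → Φ S T = - ∑ k ∈ S, sg K S k *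
      (if cv (S.erase k) ∨ u (S.erase k) ∈ T then 0 else (-1 : K) ^ (S.erase k).card *
        (sg K T (u (S.erase k)) * Φ (S.erase k) (insert (u (S.erase k)) T))) := by
    intro S T hS
    have := congrFun (congrFun hΦ S) T
    rw [this]
    simp [Ψ, hS, dT, hh]
  have hbase : ∀ T, Φ ∅ T = psi K W z T := by
    intro T
    rw [hΦ]; simp [Ψ, dT]
  have herase : ∀ B ⊆ B0, ∀ x ∈ B, (B.image κ).erase (κ x) = (B.erase x).image κ := by
    intro B hB x hx
    ext k
    simp only [Finset.mem_erase, Finset.mem_image]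
    constructor
    · rintro ⟨h1, y, hy, rfl⟩
      exact ⟨y, ⟨fun h => h1 (by rw [h]), hy⟩, rfl⟩
    · rintro ⟨y, ⟨h1, hy⟩, rfl⟩
      refine ⟨fun h => h1 ?_, y, hy, rfl⟩
      exact hinj y (hB hy) x (hB hx) (h ▸ hself y (hB hy))
  have hunc : ∀ B ⊆ B0, B0 \ (B.image κ).biUnion c = B0 \ B := by
    intro B hB
    ext x
    simp only [Finset.mem_sdiff, Finset.mem_biUnion, Finset.mem_image]
    refine and_congr_right fun hx => not_congr ?_
    constructor
    · rintro ⟨_, ⟨y, hy, rfl⟩, h⟩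
      rwa [hinj x hx y (hB hy) h]
    · intro h; exact ⟨κ x, ⟨x, h, rfl⟩, hself x hx⟩
  have humin : ∀ B ⊆ B0, ∀ x ∈ B, ¬ cv ((B.erase x).image κ) ∧
      u ((B.erase x).image κ) ∈ insert x (B0 \ B) ∧
      ∀ t ∈ insert x (B0 \ B), u ((B.erase x).image κ) ≤ t := by
    intro B hB x hx
    have h1 := hunc (B.erase x) ((Finset.erase_subset _ _).trans hB)
    have h2 : B0 \ B.erase x = insert x (B0 \ B) := by
      ext t; simp only [Finset.mem_sdiff, Finset.mem_erase, Finset.mem_insert]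
      by_cases h : t = x
      · subst h; simp [hB hx]
      · simp [h]
    rw [h2] at h1
    have hne : (B0 \ ((B.erase x).image κ).biUnion c).Nonempty := by rw [h1]; simp
    have h3 := hu1 _ hne
    refine ⟨fun h => ?_, ?_, ?_⟩
    · obtain ⟨t, ht⟩ := hne
      rw [Finset.mem_sdiff, hmB0] at ht
      exact ht.2 (h ht.1.2.2)
    · rw [← h1, h3]; exact Finset.min'_mem _ _
    · intro t ht
      rw [h3]; exact Finset.min'_le _ _ (by rw [h1]; exact ht)
  have hS0 : ∀ B : Finset V, B.Nonempty → B.image κ ≠ ∅ := by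
    intro B hB; rw [← Finset.nonempty_iff_ne_empty]; exact hB.image _
  have hinsert : ∀ B ⊆ B0, ∀ x ∈ B, insert x (B0 \ B) = B0 \ B.erase x := by
    intro B hB x hx
    ext t; simp only [Finset.mem_sdiff, Finset.mem_erase, Finset.mem_insert]
    by_cases h : t = x
    · subst h; simp [hB hx]
    · simp [h]
  -- vanishing claim
  have hvan : ∀ N, ∀ B ⊆ B0, B.card ≤ N → (∃ y ∈ B, ∃ t ∈ B0 \ B, t < y) →
      Φ (B.image κ) (B0 \ B) = 0 := by
    intro N
    induction N with
    | zero =>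
      rintro B hB hc ⟨y, hy, _⟩
      have : B = ∅ := by simpa using hc
      subst this; simp at hy
    | succ N ih =>
      rintro B hB hc ⟨y, hy, t, ht, hty⟩
      rw [hrec _ _ (hS0 B ⟨y, hy⟩), neg_eq_zero]
      refine Finset.sum_eq_zero fun k hk => ?_
      obtain ⟨x, hx, rfl⟩ := Finset.mem_image.1 hk
      rw [herase B hB x hx]
      obtain ⟨-, hm, hmin⟩ := humin B hB x hx
      split_ifs with hcase
      · simp
      · push Not at hcase
        have hux : u ((B.erase x).image κ) = x := by
          rcases Finset.mem_insert.1 hm with h | h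
          · exact h
          · exact absurd h hcase.2
        rw [hux] at hmin ⊢
        have hxy : y ≠ x := by
          rintro rfl
          exact absurd (hmin t (Finset.mem_insert_of_mem ht)) hty.not_ge
        rw [hinsert B hB x hx, ih (B.erase x) ((Finset.erase_subset _ _).trans hB)]
        · simp
        · have := Finset.card_erase_add_one hx; omega
        · refine ⟨y, Finset.mem_erase.2 ⟨hxy, hy⟩, t, ?_, hty⟩
          rw [← hinsert B hB x hx]; exact Finset.mem_insert_of_mem ht
  have hnon : ∀ N, ∀ B ⊆ B0, B.card ≤ N → (∀ y ∈ B, ∀ t ∈ B0 \ B, y < t) →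
      Φ (B.image κ) (B0 \ B) ≠ 0 := by
    have hbase' : Φ ((∅ : Finset V).image κ) (B0 \ ∅) ≠ 0 := by
      rw [Finset.image_empty, hbase, Finset.sdiff_empty, hB0]
      rcases lt_or_gt_of_ne hab with h | h
      · rw [psi_lt K W z ha hb h]
        exact mul_ne_zero (mul_ne_zero (sg_ne K _ _) (sg_ne K _ _)) hzab
      · rw [Finset.erase_right_comm, psi_lt K W z hb ha h]
        refine mul_ne_zero (mul_ne_zero (sg_ne K _ _) (sg_ne K _ _)) ?_
        rw [hanti]; exact neg_ne_zero.2 hzab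
    intro N
    induction N with
    | zero =>
      intro B hB hc _
      have : B = ∅ := by simpa using hc
      subst this; exact hbase'
    | succ N ih =>
      intro B hB hc hlt
      rcases Finset.eq_empty_or_nonempty B with rfl | hBn
      · exact hbase'
      rw [hrec _ _ (hS0 B hBn), neg_ne_zero]
      set m := B.max' hBn with hm
      have hmB : m ∈ B := Finset.max'_mem _ _
      have hux : ∀ x ∈ B, u ((B.erase x).image κ) = x := by
        intro x hx
        obtain ⟨-, h1, h2⟩ := humin B hB x hx
        rcases Finset.mem_insert.1 h1 with h | h
        · exact h
        · exact absurd (h2 x (Finset.mem_insert_self _ _)) (hlt x hx _ h).not_ge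
      have hnt : ∀ x ∈ B, x ∉ B0 \ B := fun x hx h => (Finset.mem_sdiff.1 h).2 hx
      rw [Finset.sum_eq_single_of_mem (κ m) (Finset.mem_image_of_mem _ hmB)]
      · rw [herase B hB m hmB, hux m hmB, if_neg]
        · refine mul_ne_zero (sg_ne K _ _) (mul_ne_zero (pow_ne_zero _ (by simp))
            (mul_ne_zero (sg_ne K _ _) ?_))
          rw [hinsert B hB m hmB]
          apply ih _ ((Finset.erase_subset _ _).trans hB)
          · have := Finset.card_erase_add_one hmB; omega
          · intro y hy t ht
            have hy' := Finset.mem_erase.1 hy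
            rw [← hinsert B hB m hmB] at ht
            rcases Finset.mem_insert.1 ht with rfl | ht
            · exact lt_of_le_of_ne (Finset.le_max' _ _ hy'.2) hy'.1
            · exact hlt y hy'.2 t ht
        · push Not
          exact ⟨(humin B hB m hmB).1, hnt m hmB⟩
      · intro k hk hne
        obtain ⟨x, hx, rfl⟩ := Finset.mem_image.1 hk
        have hxm : x ≠ m := fun h => hne (by rw [h])
        rw [herase B hB x hx, hux x hx, if_neg]
        · rw [hinsert B hB x hx, hvan _ (B.erase x) ((Finset.erase_subset _ _).trans hB) le_rfl]
          · simp
          · refine ⟨m, Finset.mem_erase.2 ⟨hxm.symm, hmB⟩, x, ?_,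
              lt_of_le_of_ne (Finset.le_max' _ _ hx) hxm⟩
            simp [hB hx]
        · push Not
          exact ⟨(humin B hB x hx).1, hnt x hx⟩
  refine ⟨fun S => Φ S ∅, ?_, ?_⟩
  · have := hnon _ B0 (Finset.Subset.refl _) le_rfl (by simp)
    simpa using this
  · intro S hS
    have hP := transfer K cv u (fun S T => T ⊆ W ∧ ∀ k ∈ S, c k ⊆ W ∧ Disjoint (c k) T)
      (fun S S' h h' => h'.trans (Finset.biUnion_subset_biUnion_of_subset_left _ h))
      (fun S T k h => ⟨h.1, fun j hj => h.2 j (Finset.mem_of_mem_erase hj)⟩)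
      (by
        rintro S T hS ⟨h1, h2⟩
        obtain ⟨h3, h4⟩ := hu2 S hS
        refine ⟨Finset.insert_subset h3 h1, fun k hk => ⟨(h2 k hk).1, ?_⟩⟩
        rw [Finset.disjoint_insert_right]
        exact ⟨fun h => h4 (Finset.mem_biUnion.2 ⟨k, hk, h⟩), (h2 k hk).2⟩)
      Ψ Φ
      (by
        rintro S T ⟨h1, h2⟩
        have e1 : dT K Ψ S T = 0 := by
          simp only [dT, LinearMap.coe_mk, AddHom.coe_mk, Ψ]
          refine Finset.sum_eq_zero fun k hk => ?_
          split_ifs with h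
          · rw [psi_zero, mul_zero]
            intro x hx y hy hxy hT
            refine hE k x y hxy fun v hv => ?_
            have hv1 := (h2 k hk).1 hv
            have hv2 := Finset.disjoint_left.1 (h2 k hk).2 hv
            rw [hT] at hv2
            simp only [Finset.mem_insert, Finset.mem_singleton]
            by_contra hc
            push Not at hc
            exact hv2 (by simp [hc, hv1])
          · simp
        have e2 : dK K Ψ S T = 0 := by
          simp only [dK, LinearMap.coe_mk, AddHom.coe_mk, Ψ]
          by_cases hS : S = ∅
          · simp only [hS, if_true]
            rw [psi_bd K W z hanti hz0 hsum h1, mul_zero]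
          · simp [hS]
        rw [e1, e2, add_zero])
      hΦ S
      ⟨by simp, fun k hk => ⟨by rw [← hS]; exact Finset.subset_biUnion_of_mem c hk, by simp⟩⟩
    refine Eq.trans (Finset.sum_congr rfl fun k hk => ?_) hP
    congr 1
    have : (S.erase k).biUnion c = W ↔ cv (S.erase k) := by
      constructor
      · intro h; exact h.ge
      · intro h
        refine Finset.Subset.antisymm ?_ h
        rw [← hS]
        exact Finset.biUnion_subset_biUnion_of_subset_left _ (Finset.erase_subset _ _)
    simp only [this]

end core
end EPaux
namespace EPaux
open Finset

theorem mlcm_eq {n r : ℕ} (g : Fin r → (Fin n → ℕ)) (c : Fin r → Finset (Fin n))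
    (hg : ∀ k x, g k x = if x ∈ c k then 1 else 0) (S : Finset (Fin r)) (x : Fin n) :
    EP.mlcm g S x = if x ∈ S.biUnion c then 1 else 0 := by
  unfold EP.mlcm
  apply le_antisymm
  · refine Finset.sup_le fun k hk => ?_
    rw [hg]
    split_ifs with h1 h2 h2
    · exact le_rfl
    · exact absurd (Finset.mem_biUnion.2 ⟨k, hk, h1⟩) h2
    · simp
    · simp
  · split_ifs with h
    · obtain ⟨k, hk, hx⟩ := Finset.mem_biUnion.1 h
      have := Finset.le_sup (f := fun k => g k x) hk
      rw [hg, if_pos hx] at this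
      exact this
    · simp

theorem mlcm_iff {n r : ℕ} (g : Fin r → (Fin n → ℕ)) (c : Fin r → Finset (Fin n))
    (hg : ∀ k x, g k x = if x ∈ c k then 1 else 0) (S S' : Finset (Fin r)) :
    EP.mlcm g S = EP.mlcm g S' ↔ S.biUnion c = S'.biUnion c := by
  constructor
  · intro h
    ext x
    have := congrFun h x
    rw [mlcm_eq g c hg, mlcm_eq g c hg] at this
    split_ifs at this with h1 h2 h2
    · exact iff_of_true h1 h2
    · exact iff_of_false h1 h2
  · intro h
    funext x
    rw [mlcm_eq g c hg, mlcm_eq g c hg, h]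

theorem mlcm_sum {n r : ℕ} (g : Fin r → (Fin n → ℕ)) (c : Fin r → Finset (Fin n))
    (hg : ∀ k x, g k x = if x ∈ c k then 1 else 0) (S : Finset (Fin r)) :
    ∑ x, EP.mlcm g S x = (S.biUnion c).card := by
  simp only [mlcm_eq g c hg]
  rw [Finset.sum_ite_mem]
  simp

theorem tor_ne (K : Type) [Field K] {n r : ℕ} (g : Fin r → (Fin n → ℕ))
    (c : Fin r → Finset (Fin n)) (hg : ∀ k x, g k x = if x ∈ c k then 1 else 0)
    (W : Finset (Fin n)) (S0 : Finset (Fin r)) (hS0 : S0.biUnion c = W)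
    (hmin : ∀ k ∈ S0, (S0.erase k).biUnion c ≠ W)
    (φ : Finset (Fin r) → K) (hφ0 : φ S0 ≠ 0)
    (hφ : ∀ S : Finset (Fin r), S.biUnion c = W →
        ∑ k ∈ S, sg K S k * (if (S.erase k).biUnion c = W then φ (S.erase k) else 0) = 0) :
    EP.torRank K g S0.card W.card ≠ 0 := by
  let L : (Finset (Fin r) →₀ K) →ₗ[K] K :=
    Finsupp.lsum K fun S => LinearMap.toSpanSingleton K K (if S.biUnion c = W then φ S else 0)
  have hL : ∀ S, L (Finsupp.single S 1) = if S.biUnion c = W then φ S else 0 := by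
    intro S; simp [L]
  have hbd : ∀ S, EP.bdT K g (Finsupp.single S 1) = ∑ k ∈ S,
      if (S.erase k).biUnion c = S.biUnion c
      then sg K S k • Finsupp.single (S.erase k) (1 : K) else 0 := by
    intro S; simp [EP.bdT, mlcm_iff g c hg, sg]
  refine torRank_ne K g _ _ L (Finsupp.single S0 1) ?_ ?_ ?_ ?_
  · have : L ∘ₗ EP.bdT K g = 0 := by
      refine Finsupp.lhom_ext' fun S => LinearMap.ext_ring ?_
      simp only [LinearMap.comp_apply, Finsupp.lsingle_apply, LinearMap.zero_apply]
      rw [hbd, map_sum]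
      by_cases hS : S.biUnion c = W
      · rw [← hφ S hS]
        refine Finset.sum_congr rfl fun k _ => ?_
        rw [hS]
        split_ifs with h
        · rw [map_smul, hL, if_pos h, smul_eq_mul]
        · simp
      · refine Finset.sum_eq_zero fun k _ => ?_
        split_ifs with h
        · rw [map_smul, hL, if_neg (by rw [h]; exact hS), smul_zero]
        · simp
    intro y
    exact LinearMap.congr_fun this y
  · exact Submodule.subset_span ⟨S0, rfl, by rw [mlcm_sum g c hg, hS0], rfl⟩
  · rw [hbd]
    refine Finset.sum_eq_zero fun k hk => ?_
    rw [if_neg]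
    rw [hS0]; exact hmin k hk
  · rw [hL, if_pos hS0]; exact hφ0

theorem gBetti_ne (K : Type) [Field K] {n : ℕ} (G : SimpleGraph (Fin n)) (W : Finset (Fin n))
    (m : ℕ) (w : ℕ → Fin n) (hm : 3 ≤ m) (hW : ∀ i ≤ m, w i ∈ W) (hwm : w m = w 0)
    (hadj : ∀ i < m, (Gᶜ).Adj (w i) (w (i+1)))
    (h0 : ∀ i, 0 < i → i < m → w i ≠ w 0) (h1 : w (m-1) ≠ w 1)
    (hcom : ∀ x ∈ W, (Gᶜ).Adj x (w 0) → (Gᶜ).Adj x (w 1) → False) :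
    3 ≤ W.card ∧ EP.gBetti K G (W.card - 3) W.card ≠ 0 := by
  classical
  set a := w 0 with ha
  set b := w 1 with hb
  have hab : a ≠ b := (hadj 0 (by omega)).ne
  let e : Fin (EP.edgeFins G).card → Sym2 (Fin n) := fun k => ((EP.edgeFins G).equivFin.symm k : Sym2 (Fin n))
  have hmem : ∀ s, s ∈ EP.edgeFins G ↔ s ∈ G.edgeSet := by
    intro s; simp [EP.edgeFins]
  have he1 : ∀ k, e k ∈ G.edgeSet := by
    intro k
    have := ((EP.edgeFins G).equivFin.symm k).2
    exact (hmem _).1 this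
  have he2 : ∀ x y, G.Adj x y → ∃ k, e k = s(x, y) := by
    intro x y hxy
    have : s(x, y) ∈ EP.edgeFins G := (hmem _).2 hxy
    exact ⟨(EP.edgeFins G).equivFin ⟨_, this⟩, by simp [e]⟩
  let c : Fin (EP.edgeFins G).card → Finset (Fin n) := fun k => Finset.univ.filter (fun x => x ∈ e k)
  have hg : ∀ k x, EP.edgeGens G k x = if x ∈ c k then 1 else 0 := by
    intro k x
    simp [EP.edgeGens, c, e]
  have hc : ∀ k x y, e k = s(x, y) → c k = {x, y} := by
    intro k x y h
    ext t; simp [c, h]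
  -- the walk cycle
  let z : Fin n → Fin n → K := fun x y => ∑ i ∈ Finset.range m,
    ((if x = w i ∧ y = w (i+1) then 1 else 0) - (if y = w i ∧ x = w (i+1) then 1 else 0))
  have hanti : ∀ x y, z x y = - z y x := by
    intro x y; simp only [z]; rw [← Finset.sum_neg_distrib]
    exact Finset.sum_congr rfl fun i _ => by ring
  have hz0 : ∀ x, z x x = 0 := by
    intro x; exact Finset.sum_eq_zero fun i _ => by simp
  have hzH : ∀ x y, ¬ (Gᶜ).Adj x y → z x y = 0 := by
    intro x y hxy
    refine Finset.sum_eq_zero fun i hi => ?_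
    have := hadj i (Finset.mem_range.1 hi)
    rw [if_neg, if_neg, sub_zero]
    · rintro ⟨rfl, rfl⟩; exact hxy this.symm
    · rintro ⟨rfl, rfl⟩; exact hxy this
  have hsum : ∀ x, ∑ y ∈ W, z x y = 0 := by
    intro x
    simp only [z]
    rw [Finset.sum_comm]
    have : ∀ i ∈ Finset.range m, ∑ y ∈ W, ((if x = w i ∧ y = w (i+1) then (1:K) else 0) -
        (if y = w i ∧ x = w (i+1) then 1 else 0)) =
        (if x = w i then 1 else 0) - (if x = w (i+1) then 1 else 0) := by
      intro i hi
      have hi := Finset.mem_range.1 hi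
      rw [Finset.sum_sub_distrib]
      congr 1
      · simp only [ite_and]
        split_ifs
        · simp [hW (i+1) (by omega)]
        · simp
      · simp only [and_comm (b := x = w (i+1)), ite_and]
        split_ifs
        · simp [hW i (by omega)]
        · simp
    rw [Finset.sum_congr rfl this, Finset.sum_range_sub' (fun i => if x = w i then (1:K) else 0), hwm, sub_self]
  have hzab : z a b ≠ 0 := by
    have : z a b = 1 := by
      simp only [z]
      rw [Finset.sum_eq_single_of_mem 0 (Finset.mem_range.2 (by omega))]
      · simp [← ha, ← hb, hab.symm]
      · intro i hi hne
        have hi := Finset.mem_range.1 hi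
        rw [if_neg, if_neg, sub_zero]
        · rintro ⟨e1, e2⟩
          have : i + 1 = m := by
            by_contra hc
            exact h0 (i+1) (by omega) (by omega) e2.symm
          apply h1
          rw [e1]; congr 1; omega
        · rintro ⟨e1, -⟩
          exact h0 i (by omega) hi e1.symm
    rw [this]; exact one_ne_zero
  have hE : ∀ k x y, x ≠ y → c k ⊆ {x, y} → z x y = 0 := by
    intro k x y hxy hk
    apply hzH
    have h2 := he1 k
    obtain ⟨p, q, hpq⟩ : ∃ p q, e k = s(p, q) := by
      induction e k using Sym2.ind with | _ p q => exact ⟨p, q, rfl⟩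
    rw [hpq, SimpleGraph.mem_edgeSet] at h2
    rw [hc k p q hpq] at hk
    have hp := hk (Finset.mem_insert_self _ _)
    have hq := hk (Finset.mem_insert_of_mem (Finset.mem_singleton_self _))
    simp only [Finset.mem_insert, Finset.mem_singleton] at hp hq
    have hne := h2.ne
    rw [SimpleGraph.compl_adj]
    rintro ⟨_, hn⟩
    rcases hp with rfl | rfl <;> rcases hq with rfl | rfl
    · exact hne rfl
    · exact hn h2
    · exact hn h2.symm
    · exact hne rfl
  -- star forest
  have haW : a ∈ W := hW 0 (by omega)
  have hbW : b ∈ W := hW 1 (by omega)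
  let q : Fin n → Fin n := fun x => if G.Adj x a then a else b
  have hq : ∀ x, q x = a ∨ q x = b := by
    intro x; simp only [q]; split_ifs <;> simp
  have hqadj : ∀ x ∈ (W.erase a).erase b, G.Adj x (q x) := by
    intro x hx
    simp only [Finset.mem_erase] at hx
    simp only [q]
    split_ifs with h
    · exact h
    · by_contra hn
      exact hcom x hx.2.2 (by rw [SimpleGraph.compl_adj]; exact ⟨hx.2.1, h⟩)
        (by rw [SimpleGraph.compl_adj]; exact ⟨hx.1, hn⟩)
  have hw2 : w 2 ∈ (W.erase a).erase b ∧ q (w 2) = a := by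
    have h2 := hadj 1 (by omega)
    have hne : w 2 ≠ a := h0 2 (by omega) (by omega)
    refine ⟨by simp only [Finset.mem_erase]; exact ⟨h2.ne.symm, hne, hW 2 (by omega)⟩, ?_⟩
    simp only [q]
    rw [if_pos]
    by_contra hn
    exact hcom (w 2) (hW 2 (by omega)) (by rw [SimpleGraph.compl_adj]; exact ⟨hne, hn⟩) h2.symm
  have hwl : w (m-1) ∈ (W.erase a).erase b ∧ q (w (m-1)) = b := by
    have h2 := hadj (m-1) (by omega)
    rw [Nat.sub_add_cancel (by omega), hwm] at h2
    refine ⟨by simp only [Finset.mem_erase]; exact ⟨h1, h2.ne, hW (m-1) (by omega)⟩, ?_⟩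
    simp only [q]
    rw [if_neg]
    exact ((SimpleGraph.compl_adj _ _ _).1 h2).2
  have hex : ∀ x, ∃ k, x ∈ (W.erase a).erase b → e k = s(x, q x) := by
    intro x
    by_cases hx : x ∈ (W.erase a).erase b
    · obtain ⟨k, hk⟩ := he2 _ _ (hqadj x hx)
      exact ⟨k, fun _ => hk⟩
    · obtain ⟨k, hk⟩ := he2 _ _ (hqadj _ hw2.1)
      exact ⟨k, fun h => absurd h hx⟩
  choose κ hκ' using hex
  have hκ : ∀ x ∈ (W.erase a).erase b, c (κ x) = {x, q x} := fun x hx => hc _ _ _ (hκ' x hx)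
  obtain ⟨φ, hφ0, hφ⟩ := exists_cocycle K c W a b haW hbW hab z hanti hz0 hsum hE hzab κ q hq hκ
  set B0 := (W.erase a).erase b with hB0
  have hmB0 : ∀ x, x ∈ B0 ↔ x ≠ b ∧ x ≠ a ∧ x ∈ W := by
    intro x; simp [hB0]
  have hinj : ∀ x ∈ B0, ∀ y ∈ B0, x ∈ c (κ y) → x = y := by
    intro x hx y hy h
    rw [hκ y hy] at h
    simp only [Finset.mem_insert, Finset.mem_singleton] at h
    rw [hmB0] at hx
    rcases h with h | h
    · exact h
    · rcases hq y with h' | h' <;> rw [h'] at h <;> tauto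
  have hself : ∀ x ∈ B0, x ∈ c (κ x) := fun x hx => by rw [hκ x hx]; simp
  have hcov : (B0.image κ).biUnion c = W := by
    ext x
    simp only [Finset.mem_biUnion, Finset.mem_image]
    constructor
    · rintro ⟨_, ⟨y, hy, rfl⟩, hx⟩
      rw [hκ y hy] at hx
      simp only [Finset.mem_insert, Finset.mem_singleton] at hx
      rcases hx with rfl | rfl
      · exact ((hmB0 _).1 hy).2.2
      · rcases hq y with h | h <;> rw [h] <;> assumption
    · intro hx
      by_cases hxa : x = a
      · exact ⟨_, ⟨w 2, hw2.1, rfl⟩, by rw [hκ _ hw2.1, hw2.2]; simp [hxa]⟩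
      by_cases hxb : x = b
      · exact ⟨_, ⟨w (m-1), hwl.1, rfl⟩, by rw [hκ _ hwl.1, hwl.2]; simp [hxb]⟩
      have hx' : x ∈ B0 := (hmB0 x).2 ⟨hxb, hxa, hx⟩
      exact ⟨_, ⟨x, hx', rfl⟩, hself x hx'⟩
  have hcard : (B0.image κ).card = B0.card := by
    refine Finset.card_image_of_injOn fun x hx y hy hxy => ?_
    exact hinj x hx y hy (hxy ▸ hself x hx)
  have hB0card : B0.card + 2 = W.card := by
    have e1 := Finset.card_erase_add_one haW
    have e2 := Finset.card_erase_add_one (show b ∈ W.erase a by simp [hab.symm, hbW])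
    rw [← hB0] at e2
    omega
  have hpos : 0 < B0.card := Finset.card_pos.2 ⟨_, hw2.1⟩
  refine ⟨by omega, ?_⟩
  have := tor_ne K (EP.edgeGens G) c hg W (B0.image κ) hcov ?_ φ hφ0 hφ
  · unfold EP.gBetti EP.betti
    rw [hcard] at this
    convert this using 2
    omega
  · intro k hk h
    obtain ⟨x, hx, rfl⟩ := Finset.mem_image.1 hk
    have hxW := ((hmB0 x).1 hx).2.2
    rw [← h, Finset.mem_biUnion] at hxW
    obtain ⟨k', hk', hxk⟩ := hxW
    obtain ⟨hne, hk'⟩ := Finset.mem_erase.1 hk'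
    obtain ⟨y, hy, rfl⟩ := Finset.mem_image.1 hk'
    exact hne (by rw [hinj x hx y hy hxk])

theorem gBetti_bdd (K : Type) [Field K] {n : ℕ} (G : SimpleGraph (Fin n)) (i j : ℕ)
    (h : EP.gBetti K G i j ≠ 0) : i ≤ (EP.edgeFins G).card := by
  by_contra hi
  push Not at hi
  apply h
  unfold EP.gBetti EP.betti EP.torRank
  have : EP.strand K (EP.edgeGens G) (i+1) j = ⊥ := by
    unfold EP.strand
    rw [Submodule.span_eq_bot]
    rintro _ ⟨S, hS, _⟩
    have := Finset.card_le_univ S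
    simp at this
    omega
  rw [this]
  rw [bot_inf_eq, inf_bot_eq, finrank_bot]

theorem bounds (K : Type) [Field K] {n : ℕ} (G : SimpleGraph (Fin n)) (t : ℕ)
    (ht : EP.gIndex K G = t) (h : EP.AMFI K G) (N : ℕ) (hN : 3 ≤ N)
    (hb : EP.gBetti K G (N - 3) N ≠ 0) : t + 3 ≤ N ∧ N ≤ t + 4 := by
  constructor
  · have : EP.gIndex K G ≤ ((N - 3 : ℕ) : ℕ∞) :=
      sInf_le ⟨N - 3, N, rfl, by omega, hb⟩
    rw [ht] at this
    have := Nat.cast_le.1 this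
    omega
  · have h2 : N - 3 ≤ EP.gPd K G := by
      refine le_csSup ⟨(EP.edgeFins G).card, ?_⟩ ⟨N, hb⟩
      rintro i ⟨j, hij⟩
      exact gBetti_bdd K G i j hij
    unfold EP.AMFI at h
    rw [ht] at h
    have h3 : t + 1 = EP.gPd K G := by exact_mod_cast h
    omega

end EPaux
namespace EPaux
open Finset

theorem nat_ne {l i j : ℕ} (hi : i < l) (hj : j < l) (h : i ≠ j) : (i : ZMod l) ≠ (j : ZMod l) := by
  rw [Ne, ZMod.natCast_eq_natCast_iff', Nat.mod_eq_of_lt hi, Nat.mod_eq_of_lt hj]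
  exact h

theorem cyc_nocommon {n : ℕ} (G : SimpleGraph (Fin n)) (l : ℕ) (hl : 3 < l) (f : ZMod l → Fin n)
    (hcyc : ∀ i j : ZMod l, (Gᶜ).Adj (f i) (f j) ↔ (j = i + 1 ∨ i = j + 1)) (e i : ZMod l)
    (h1 : (Gᶜ).Adj (f i) (f e)) (h2 : (Gᶜ).Adj (f i) (f (e+1))) : False := by
  rw [hcyc] at h1 h2
  have a1 : (1 : ZMod l) ≠ 0 := by simpa using nat_ne (l := l) (i := 1) (j := 0) (by omega) (by omega) (by omega)
  have a3 : (3 : ZMod l) ≠ 0 := by simpa using nat_ne (l := l) (i := 3) (j := 0) (by omega) (by omega) (by omega)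
  rcases h1 with h1 | h1 <;> rcases h2 with h2 | h2
  · exact a1 (by linear_combination h2 - h1)
  · exact a3 (by linear_combination - h2 - h1)
  · exact a1 (by linear_combination - h2 - h1)
  · exact a1 (by linear_combination h1 - h2)

theorem cyc_betti (K : Type) [Field K] {n : ℕ} (G : SimpleGraph (Fin n)) (l : ℕ) (hl : 3 < l)
    (f : ZMod l → Fin n) (hinj : Function.Injective f)
    (hcyc : ∀ i j : ZMod l, (Gᶜ).Adj (f i) (f j) ↔ (j = i + 1 ∨ i = j + 1))
    (W : Finset (Fin n)) (hW : ∀ i, f i ∈ W) (e : ZMod l)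
    (hcom : ∀ x ∈ W, x ∉ Set.range f → (Gᶜ).Adj x (f e) → (Gᶜ).Adj x (f (e+1)) → False) :
    3 ≤ W.card ∧ EP.gBetti K G (W.card - 3) W.card ≠ 0 := by
  refine gBetti_ne K G W l (fun s => f (e + (s : ZMod l))) (by omega) (fun i _ => hW _) (by simp)
    ?_ ?_ ?_ ?_
  · intro i _
    rw [hcyc]; left; push_cast; ring
  · intro i hi hil h
    have h := hinj h
    exact nat_ne hil (show 0 < l by omega) (by omega) (add_left_cancel h)
  · intro h
    have h := hinj h
    exact nat_ne (show l - 1 < l by omega) (show 1 < l by omega) (by omega) (add_left_cancel h)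
  · intro x hx h1 h2
    simp only [Nat.cast_zero, add_zero, Nat.cast_one] at h1 h2
    by_cases hxr : x ∈ Set.range f
    · obtain ⟨i, rfl⟩ := hxr
      exact cyc_nocommon G l hl f hcyc e i h1 h2
    · exact hcom x hx hxr h1 h2

/-- Two neighbours of `v` on a shortest cycle are close. -/
theorem short (K : Type) [Field K] {n : ℕ} (G : SimpleGraph (Fin n)) (l : ℕ) (hl : 3 < l)
    (f : ZMod l → Fin n) (hinj : Function.Injective f)
    (hcyc : ∀ i j : ZMod l, (Gᶜ).Adj (f i) (f j) ↔ (j = i + 1 ∨ i = j + 1))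
    (hmin : ∀ N, 3 ≤ N → EP.gBetti K G (N - 3) N ≠ 0 → l ≤ N)
    (v : Fin n) (hv : v ∉ Set.range f) (e : ZMod l) (hve : ¬ (Gᶜ).Adj v (f e))
    (i j : ℕ) (hi : 0 < i) (hij : i < j) (hj : j < l)
    (hvi : (Gᶜ).Adj v (f (e + (i : ZMod l)))) (hvj : (Gᶜ).Adj v (f (e + (j : ZMod l)))) : j ≤ i + 2 := by
  by_contra hlt
  push Not at hlt
  let w : ℕ → Fin n := fun s => if s ≤ i then f (e + (s : ZMod l)) else
    if s = i + 1 then v else f (e + ((s - (i + 2) + j : ℕ) : ZMod l))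
  let m := i + 2 + (l - j)
  have hw1 : ∀ s ≤ i, w s = f (e + (s : ZMod l)) := fun s hs => by simp [w, hs]
  have hw2 : w (i+1) = v := by simp [w]
  have hw3 : ∀ s, w (i + 2 + s) = f (e + ((s + j : ℕ) : ZMod l)) := by
    intro s
    simp only [w]
    rw [if_neg (by omega), if_neg (by omega), Nat.add_sub_cancel_left]
  have hcases : ∀ s, s ≤ i ∨ s = i + 1 ∨ ∃ s', s = i + 2 + s' := by
    intro s
    by_cases h1 : s ≤ i
    · exact Or.inl h1
    by_cases h2 : s = i + 1
    · exact Or.inr (Or.inl h2)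
    exact Or.inr (Or.inr ⟨s - (i+2), by omega⟩)
  clear_value w
  have hwm : w m = w 0 := by
    rw [hw3, hw1 0 (by omega), Nat.sub_add_cancel hj.le]; simp
  let W : Finset (Fin n) := (Finset.range m).image w
  have hWc : W.card ≤ m := by
    simpa using Finset.card_image_le (s := Finset.range m) (f := w)
  have key := gBetti_ne K G W m w (by omega) ?_ hwm ?_ ?_ ?_ ?_
  · have := hmin _ key.1 key.2
    omega
  · intro s hs
    rcases Nat.lt_or_ge s m with h | h
    · exact Finset.mem_image_of_mem _ (Finset.mem_range.2 h)
    · have : s = m := by omega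
      rw [this, hwm]
      exact Finset.mem_image_of_mem _ (Finset.mem_range.2 (by omega))
  · intro s hs
    rcases hcases s with h | h | ⟨s', h⟩
    · rcases Nat.lt_or_ge s i with h' | h'
      · rw [hw1 s h, hw1 (s+1) (by omega), hcyc]; left; push_cast; ring
      · have : s = i := by omega
        rw [this, hw1 i le_rfl, hw2]; exact hvi.symm
    · rw [h, hw2, show i + 1 + 1 = i + 2 + 0 by omega, hw3]
      simpa using hvj
    · rw [h, hw3, add_assoc, hw3, hcyc]; left; push_cast; ring
  · intro s hs hsm
    rw [hw1 0 (by omega)]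
    rcases hcases s with h | h | ⟨s', h⟩
    · rw [hw1 s h]
      intro h2
      exact nat_ne (show s < l by omega) (show 0 < l by omega) (by omega) (add_left_cancel (hinj h2))
    · rw [h, hw2]
      intro h2
      exact hv ⟨_, h2.symm⟩
    · rw [h, hw3]
      intro h2
      exact nat_ne (show s' + j < l by omega) (show 0 < l by omega) (by omega)
        (add_left_cancel (hinj h2))
  · rw [hw1 1 (by omega), show m - 1 = i + 2 + (l - j - 1) by omega, hw3]
    intro h2
    exact nat_ne (show l - j - 1 + j < l by omega) (show 1 < l by omega) (by omega)
        (add_left_cancel (hinj h2))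
  · intro x hx h1 h2
    rw [hw1 0 (by omega)] at h1
    rw [hw1 1 (by omega)] at h2
    simp only [Nat.cast_zero, add_zero, Nat.cast_one] at h1 h2
    obtain ⟨s, -, rfl⟩ := Finset.mem_image.1 hx
    rcases hcases s with h | h | ⟨s', h⟩
    · rw [hw1 s h] at h1 h2
      exact cyc_nocommon G l hl f hcyc e _ h1 h2
    · rw [h, hw2] at h1
      exact hve h1
    · rw [h, hw3] at h1 h2
      exact cyc_nocommon G l hl f hcyc e _ h1 h2

theorem few (K : Type) [Field K] {n : ℕ} (G : SimpleGraph (Fin n)) (l : ℕ) (hl : 3 < l)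
    (f : ZMod l → Fin n) (hinj : Function.Injective f)
    (hcyc : ∀ i j : ZMod l, (Gᶜ).Adj (f i) (f j) ↔ (j = i + 1 ∨ i = j + 1))
    (hmin : ∀ N, 3 ≤ N → EP.gBetti K G (N - 3) N ≠ 0 → l ≤ N)
    (v : Fin n) (hv : v ∉ Set.range f) (hve : ¬ ∀ e, (Gᶜ).Adj v (f e)) :
    ∃ e1 e2 : ZMod l, ∀ d, (Gᶜ).Adj v (f d) → (Gᶜ).Adj v (f (d+1)) → d = e1 ∨ d = e2 := by
  classical
  push Not at hve
  obtain ⟨e, hve⟩ := hve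
  haveI : NeZero l := ⟨by omega⟩
  have hpar : ∀ d : ZMod l, ∃ k < l, d = e + (k : ZMod l) := by
    intro d
    refine ⟨(d - e).val, ZMod.val_lt _, ?_⟩
    rw [ZMod.natCast_zmod_val]; ring
  by_cases hex : ∃ k : ℕ, (Gᶜ).Adj v (f (e + (k : ZMod l)))
  · set i := Nat.find hex with hi
    have hi1 := Nat.find_spec hex
    rw [← hi] at hi1
    refine ⟨e + (i : ZMod l), e + ((i + 1 : ℕ) : ZMod l), fun d h1 h2 => ?_⟩
    obtain ⟨k, hk, rfl⟩ := hpar d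
    have hik : i ≤ k := Nat.find_min' hex h1
    have hi0 : 0 < i := by
      rcases Nat.eq_zero_or_pos i with h | h
      · rw [h] at hi1; simp at hi1; exact absurd (by simpa using hi1) hve
      · exact h
    have hk1 : k + 1 < l := by
      by_contra hc
      have : k + 1 = l := by omega
      apply hve
      have e2 : e + (k : ZMod l) + 1 = e := by
        have : ((k + 1 : ℕ) : ZMod l) = 0 := by rw [this]; simp
        push_cast at this
        rw [add_assoc, this, add_zero]
      rwa [e2] at h2
    have h2' : (Gᶜ).Adj v (f (e + ((k + 1 : ℕ) : ZMod l))) := by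
      push_cast; rw [← add_assoc]; exact h2
    have := short K G l hl f hinj hcyc hmin v hv e hve i (k+1) hi0 (by omega) hk1 hi1 h2'
    have : k = i ∨ k = i + 1 := by omega
    rcases this with rfl | h
    · exact Or.inl rfl
    · right; rw [h]
  · refine ⟨0, 0, fun d h1 _ => ?_⟩
    obtain ⟨k, _, rfl⟩ := hpar d
    exact absurd ⟨k, h1⟩ hex

end EPaux

/-- If `I(G)` has almost maximal finite index with `index(I(G)) > 1`, and
`C` is an induced cycle of length `> 3` in the complement `Ḡ`, then at most one vertex
outside `C` fails to be adjacent in `Ḡ` to all vertices of `C`. -/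
theorem statement8 (K : Type) [Field K] (n : ℕ) (G : SimpleGraph (Fin n))
    (h : EP.AMFI K G) (hidx : 1 < EP.gIndex K G)
    (l : ℕ) (hl : 3 < l) (f : ZMod l → Fin n) (hinj : Function.Injective f)
    (hcyc : ∀ i j : ZMod l, (Gᶜ).Adj (f i) (f j) ↔ (j = i + 1 ∨ i = j + 1)) :
    ∀ v w : Fin n, v ∉ Set.range f → w ∉ Set.range f →
      (¬ ∀ i : ZMod l, (Gᶜ).Adj v (f i)) → (¬ ∀ i : ZMod l, (Gᶜ).Adj w (f i)) → v = w := by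
  classical
  haveI : NeZero l := ⟨by omega⟩
  obtain ⟨t, ht⟩ : ∃ t : ℕ, EP.gIndex K G = t := by
    have h' := h
    unfold EP.AMFI at h'
    have hne : EP.gIndex K G ≠ ⊤ := by
      intro hI
      rw [hI, top_add] at h'
      exact ENat.coe_ne_top _ h'.symm
    obtain ⟨t, ht⟩ := ENat.ne_top_iff_exists.1 hne
    exact ⟨t, ht.symm⟩
  have ht1 : 1 < t := by rw [ht] at hidx; exact_mod_cast hidx
  have hB := EPaux.bounds K G t ht h
  intro v w hv hw hvn hwn
  by_contra hvw
  let C : Finset (Fin n) := Finset.univ.image f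
  have hCcard : C.card = l := by
    rw [Finset.card_image_of_injective _ hinj]; simp [ZMod.card]
  have hC : ∀ i, f i ∈ C := fun i => Finset.mem_image_of_mem _ (Finset.mem_univ _)
  have hmemC : ∀ x, x ∈ C → x ∈ Set.range f := by
    intro x hx
    obtain ⟨i, -, rfl⟩ := Finset.mem_image.1 hx
    exact ⟨i, rfl⟩
  have hvC : v ∉ C := fun hx => hv (hmemC v hx)
  have hwC : w ∉ C := fun hx => hw (hmemC w hx)
  have b1 := EPaux.cyc_betti K G l hl f hinj hcyc C hC 0
    (fun x hx hxr => absurd (hmemC x hx) hxr)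
  have b1' := hB _ b1.1 b1.2
  rw [hCcard] at b1'
  have hl3 : l = t + 3 := by
    have hvn' := hvn
    push Not at hvn'
    obtain ⟨e, he⟩ := hvn'
    have b2 := EPaux.cyc_betti K G l hl f hinj hcyc (insert v C)
      (fun i => Finset.mem_insert_of_mem (hC i)) e (by
        intro x hx hxr h1 h2
        rcases Finset.mem_insert.1 hx with rfl | hx
        · exact he h1
        · exact hxr (hmemC x hx))
    have b2' := hB _ b2.1 b2.2
    rw [Finset.card_insert_of_notMem hvC, hCcard] at b2'
    omega
  have hmin : ∀ N, 3 ≤ N → EP.gBetti K G (N - 3) N ≠ 0 → l ≤ N := by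
    intro N h1 h2
    have := (hB N h1 h2).1
    omega
  obtain ⟨e1, e2, h12⟩ := EPaux.few K G l hl f hinj hcyc hmin v hv hvn
  obtain ⟨e3, e4, h34⟩ := EPaux.few K G l hl f hinj hcyc hmin w hw hwn
  obtain ⟨e, -, he⟩ : ∃ e ∈ (Finset.univ : Finset (ZMod l)), e ∉ ({e1, e2, e3, e4} : Finset (ZMod l)) := by
    apply Finset.exists_mem_notMem_of_card_lt_card
    have := Finset.card_le_four (a := e1) (b := e2) (c := e3) (d := e4)
    rw [Finset.card_univ, ZMod.card]
    omega
  simp only [Finset.mem_insert, Finset.mem_singleton, not_or] at he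
  have b3 := EPaux.cyc_betti K G l hl f hinj hcyc (insert w (insert v C))
    (fun i => Finset.mem_insert_of_mem (Finset.mem_insert_of_mem (hC i))) e (by
      intro x hx hxr h1 h2
      rcases Finset.mem_insert.1 hx with rfl | hx
      · rcases h34 e h1 h2 with h | h
        · exact he.2.2.1 h
        · exact he.2.2.2 h
      rcases Finset.mem_insert.1 hx with rfl | hx
      · rcases h12 e h1 h2 with h | h
        · exact he.1 h
        · exact he.2.1 h
      · exact hxr (hmemC x hx))
  have b3' := hB _ b3.1 b3.2
  rw [Finset.card_insert_of_notMem (by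
      rw [Finset.mem_insert, not_or]; exact ⟨fun h => hvw h.symm, hwC⟩),
    Finset.card_insert_of_notMem hvC, hCcard] at b3'
  omega
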